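/- Let α > 0. Let R: ℝ → ℂ be a continuous integrable function whose Fourier transform R̂ is integrable, for which the Fourier inversion formula R(t) = (1/(2π)) ∫_ℝ e^{izt} R̂(z) dz holds for all t ∈ ℝ, and which satisfies ∫_ℝ |R̂(z)| |z|^α dz < ∞. Let ψ: ℝ → ℂ be integrable with ψ̂(0) = 0, and suppose ψ̂ is Hölder (Lipschitz of order α/2): there is L > 0 such that |ψ̂(y) − ψ̂(y′)| ≤ L |y − y′|^{α/2} for all y, y′ ∈ ℝ. For j ∈ ℕ₀, k ∈ ℤ set ψ_{jk}(x) := 2^{j/2} ψ(2^j x − k). Then for every j ∈ ℕ₀ and k ∈ ℤ, | ∫_ℝ ∫_ℝ R(u − v) conj(ψ_{jk}(u)) ψ_{jk}(v) du dv | ≤ (L² / (π · 2^{1 + j(1+α)})) ∫_ℝ |R̂(z)| |z|^α dz; in particular this bound is uniform in k and decays geometrically in j. -/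

import Mathlib

open MeasureTheory Complex

/-- The Fourier transform `ĝ(y) = ∫_ℝ e^{-iyx} g(x) dx`. -/
noncomputable def ft (g : ℝ → ℂ) (y : ℝ) : ℂ :=
  ∫ x : ℝ, Complex.exp (-(Complex.I * y * x)) * g x

/-- The dilated-translated wavelet `ψ_{jk}(x) = 2^{j/2} ψ(2^j x − k)`. -/
noncomputable def wav (ψ : ℝ → ℂ) (j : ℕ) (k : ℤ) (x : ℝ) : ℂ :=
  (((2 : ℝ) ^ ((j : ℝ) / 2) : ℝ) : ℂ) * ψ ((2 : ℝ) ^ j * x - k)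

/-!
If `R` is the inverse Fourier transform of a spectral density `S`, then by Fubini
`∫∫ R(u − v) conj(φ(u)) φ(v) du dv` is the integral of `S |φ̂|²`. For `φ = ψ_{jk}` the factor
`|φ̂(z)|²` is `2^{-j} |ψ̂(z / 2^j)|²`, independently of `k`; since `ψ̂` vanishes at the origin to
Hölder order `α / 2`, this is at most `2^{-j} L² |z / 2^j|^α`.
-/

open scoped ComplexConjugate

section FourierTransform

theorem ft_eq_fourierIntegral_probChar (g : ℝ → ℂ) :
    ft g = Fourier.fourierIntegral Real.probChar volume g := by
  ext y
  simp only [ft, Fourier.fourierIntegral, VectorFourier.fourierIntegral_probChar,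
    LinearMap.mul_apply', smul_eq_mul, ofReal_mul]
  congr! 4
  ring

theorem ft_const_mul (c : ℂ) (g : ℝ → ℂ) (z : ℝ) : ft (fun x ↦ c * g x) z = c * ft g z := by
  simp only [ft, mul_left_comm _ c, integral_const_mul]

theorem ft_comp_mul_left (g : ℝ → ℂ) {a : ℝ} (ha : a ≠ 0) (z : ℝ) :
    ft (fun x ↦ g (a * x)) z = (|a⁻¹| : ℝ) * ft g (z / a) := by
  have ha' : (a : ℂ) ≠ 0 := ofReal_ne_zero.2 ha
  rw [ft, ft, ← real_smul, ← Measure.integral_comp_mul_left]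
  congr! 4
  push_cast
  field_simp

theorem ft_comp_sub_right (g : ℝ → ℂ) (b z : ℝ) :
    ft (fun x ↦ g (x - b)) z = exp (-(I * z * b)) * ft g z := by
  rw [ft, ft, ← integral_add_right_eq_self _ b, ← integral_const_mul]
  congr! 2
  rw [add_sub_cancel_right, ← mul_assoc, ← exp_add]
  congr 2
  push_cast
  ring

end FourierTransform

section SpectralDensity

variable {μ : Measure ℝ} {f g : ℝ → ℂ}

theorem integrable_mul_ft (hf : Integrable f μ) (hg : Integrable g) :
    Integrable (fun z ↦ f z * ft g z) μ := by
  rw [ft_eq_fourierIntegral_probChar]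
  have hcont : Continuous (Fourier.fourierIntegral Real.probChar volume g) :=
    VectorFourier.fourierIntegral_continuous Real.continuous_probChar continuous_mul hg
  exact hf.mul_bdd hcont.aestronglyMeasurable
    (.of_forall (Fourier.norm_fourierIntegral_le_integral_norm _ _ g))

variable [SigmaFinite μ]

theorem integral_mul_ft (hf : Integrable f μ) (hg : Integrable g) :
    ∫ z, f z * ft g z ∂μ = ∫ v : ℝ, (∫ z : ℝ, exp (-(I * z * v)) * f z ∂μ) * g v := by
  have hphase (a b : ℂ) : -(a * b) * I = -(I * a * b) := by ring
  have h := VectorFourier.integral_fourierIntegral_smul_eq_flip (L := LinearMap.mul ℝ ℝ)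
    Real.continuous_probChar continuous_mul hf hg
  simp only [VectorFourier.fourierIntegral_probChar, LinearMap.flip_apply, LinearMap.mul_apply',
    smul_eq_mul, ofReal_mul, hphase] at h
  exact h.symm

theorem integral_mul_conj_ft (hf : Integrable f μ) (hg : Integrable g) :
    ∫ z, f z * conj (ft g z) ∂μ =
      ∫ u : ℝ, (∫ z : ℝ, exp (I * z * u) * f z ∂μ) * conj (g u) := by
  have hphase (a b : ℂ) : a * b * I = I * b * a := by ring
  have h := VectorFourier.integral_sesq_fourierIntegral_eq_neg_flip (innerSL ℂ)
    (L := LinearMap.mul ℝ ℝ) Real.continuous_probChar continuous_mul hg hf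
  simp only [VectorFourier.fourierIntegral_probChar, LinearMap.neg_apply, LinearMap.flip_apply,
    LinearMap.mul_apply', innerSL_apply_apply, RCLike.inner_apply, smul_eq_mul, ofReal_mul,
    ofReal_neg, neg_neg, neg_mul (_ * _) I, hphase] at h
  exact h

theorem integral_integral_exp_sub_mul (hf : Integrable f μ) (hg : Integrable g) (u : ℝ) :
    ∫ v : ℝ, (∫ z : ℝ, exp (I * z * (u - v : ℝ)) * f z ∂μ) * g v =
      ∫ z : ℝ, exp (I * z * u) * (f z * ft g z) ∂μ := by
  have hmod : Integrable (fun z : ℝ ↦ exp (I * z * u) * f z) μ := by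
    refine hf.bdd_mul (c := 1) (Continuous.aestronglyMeasurable (by fun_prop)) ?_
    refine .of_forall fun z ↦ le_of_eq ?_
    rw [mul_assoc, ← ofReal_mul, norm_exp_I_mul_ofReal]
  simp only [← mul_assoc]
  rw [integral_mul_ft hmod hg]
  congr! 5 with v z
  rw [← mul_assoc, ← exp_add]
  congr 2
  push_cast
  ring

theorem integral_integral_exp_sub_mul_conj_mul (hf : Integrable f μ) {φ χ : ℝ → ℂ}
    (hφ : Integrable φ) (hχ : Integrable χ) :
    ∫ u : ℝ, ∫ v : ℝ, (∫ z : ℝ, exp (I * z * (u - v : ℝ)) * f z ∂μ) * conj (χ u) * φ v =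
      ∫ z, f z * ft φ z * conj (ft χ z) ∂μ := by
  rw [integral_mul_conj_ft (integrable_mul_ft hf hφ) hχ]
  congr! 2 with u
  simp only [mul_right_comm _ (conj (χ u))]
  rw [integral_mul_const, integral_integral_exp_sub_mul hf hφ]

theorem norm_integral_integral_exp_sub_mul_conj_mul_le (hf : Integrable f μ) {φ : ℝ → ℂ}
    (hφ : Integrable φ) {w : ℝ → ℝ} (hw : ∀ z, ‖ft φ z‖ ^ 2 ≤ w z)
    (hfw : Integrable (fun z ↦ ‖f z‖ * w z) μ) :
    ‖∫ u : ℝ, ∫ v : ℝ, (∫ z : ℝ, exp (I * z * (u - v : ℝ)) * f z ∂μ) * conj (φ u) * φ v‖ ≤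
      ∫ z, ‖f z‖ * w z ∂μ := by
  rw [integral_integral_exp_sub_mul_conj_mul hf hφ hφ]
  refine norm_integral_le_of_norm_le hfw (.of_forall fun z ↦ ?_)
  rw [norm_mul, norm_mul, RCLike.norm_conj, mul_assoc, ← sq]
  exact mul_le_mul_of_nonneg_left (hw z) (norm_nonneg _)

end SpectralDensity

section Wavelet

variable {ψ : ℝ → ℂ}

theorem integrable_wav (hψ : Integrable ψ) (j : ℕ) (k : ℤ) : Integrable (wav ψ j k) :=
  ((hψ.comp_sub_right (k : ℝ)).comp_mul_left' (by positivity)).const_mul _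

theorem ft_wav (ψ : ℝ → ℂ) (j : ℕ) (k : ℤ) (z : ℝ) :
    ft (wav ψ j k) z =
      ((2 : ℝ) ^ (-(j : ℝ) / 2) : ℝ) * exp (-(I * (z / 2 ^ j : ℝ) * k)) * ft ψ (z / 2 ^ j) := by
  have hscale : (2 : ℝ) ^ (-(j : ℝ) / 2) = (2 : ℝ) ^ ((j : ℝ) / 2) * ((2 : ℝ) ^ j)⁻¹ := by
    rw [← Real.rpow_natCast, ← Real.rpow_neg zero_le_two, ← Real.rpow_add zero_lt_two]
    ring_nf
  have hdilate : ft (fun x ↦ ψ (2 ^ j * x - k)) z =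
      (((2 : ℝ) ^ j)⁻¹ : ℝ) * ft (fun x ↦ ψ (x - k)) (z / 2 ^ j) := by
    rw [ft_comp_mul_left (fun x ↦ ψ (x - k)) (by positivity : (2 : ℝ) ^ j ≠ 0),
      abs_of_pos (by positivity)]
  unfold wav
  rw [ft_const_mul, hdilate, ft_comp_sub_right, ofReal_intCast, hscale]
  push_cast
  ring

theorem norm_ft_wav_sq (ψ : ℝ → ℂ) (j : ℕ) (k : ℤ) (z : ℝ) :
    ‖ft (wav ψ j k) z‖ ^ 2 = ((2 : ℝ) ^ j)⁻¹ * ‖ft ψ (z / 2 ^ j)‖ ^ 2 := by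
  have hphase : ‖exp (-(I * (z / 2 ^ j : ℝ) * k))‖ = 1 := by
    simpa [mul_assoc] using norm_exp_I_mul_ofReal (-(z / 2 ^ j * k))
  have hscale : ((2 : ℝ) ^ (-(j : ℝ) / 2)) ^ 2 = ((2 : ℝ) ^ j)⁻¹ := by
    rw [← Real.rpow_mul_natCast zero_le_two, Nat.cast_ofNat, div_mul_cancel₀ _ two_ne_zero,
      Real.rpow_neg zero_le_two, Real.rpow_natCast]
  rw [ft_wav, norm_mul, norm_mul, hphase, mul_one, norm_real,
    Real.norm_of_nonneg (by positivity), mul_pow, hscale]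

theorem norm_ft_wav_sq_le {α L : ℝ} (hψ : ∀ y, ‖ft ψ y‖ ≤ L * |y| ^ (α / 2))
    (j : ℕ) (k : ℤ) (z : ℝ) :
    ‖ft (wav ψ j k) z‖ ^ 2 ≤ L ^ 2 / (2 : ℝ) ^ ((j : ℝ) * (1 + α)) * |z| ^ α := by
  have hsq : ‖ft ψ (z / 2 ^ j)‖ ^ 2 ≤ L ^ 2 * |z / 2 ^ j| ^ α := by
    calc ‖ft ψ (z / 2 ^ j)‖ ^ 2 ≤ (L * |z / 2 ^ j| ^ (α / 2)) ^ 2 := by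
          gcongr
          exact hψ _
      _ = L ^ 2 * |z / 2 ^ j| ^ α := by
          rw [mul_pow, ← Real.rpow_mul_natCast (abs_nonneg _), Nat.cast_ofNat,
            div_mul_cancel₀ _ two_ne_zero]
  have hdilate : |z / 2 ^ j| ^ α = |z| ^ α / (2 : ℝ) ^ (j * α) := by
    rw [abs_div, abs_of_pos (by positivity : (0 : ℝ) < 2 ^ j),
      Real.div_rpow (abs_nonneg _) (by positivity), ← Real.rpow_natCast_mul zero_le_two]
  have hpow : (2 : ℝ) ^ ((j : ℝ) * (1 + α)) = 2 ^ j * (2 : ℝ) ^ (j * α) := by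
    rw [mul_one_add, Real.rpow_add zero_lt_two, Real.rpow_natCast]
  calc ‖ft (wav ψ j k) z‖ ^ 2 = ((2 : ℝ) ^ j)⁻¹ * ‖ft ψ (z / 2 ^ j)‖ ^ 2 := norm_ft_wav_sq ψ j k z
    _ ≤ ((2 : ℝ) ^ j)⁻¹ * (L ^ 2 * |z / 2 ^ j| ^ α) := by gcongr
    _ = L ^ 2 / (2 : ℝ) ^ ((j : ℝ) * (1 + α)) * |z| ^ α := by
        rw [hdilate, hpow]
        field_simp

end Wavelet

/-- `S ∂μ` is the spectral measure of `R`; since `μ` need not be Lebesgue measure, discrete and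
singular spectra are covered. -/
theorem stmt_9_general {μ : Measure ℝ} [SigmaFinite μ] {α L : ℝ} {R S ψ : ℝ → ℂ}
    (hS : Integrable S μ)
    (hR : ∀ t : ℝ, R t = (1 / (2 * Real.pi) : ℝ) * ∫ z : ℝ, exp (I * z * t) * S z ∂μ)
    (hSα : Integrable (fun z ↦ ‖S z‖ * |z| ^ α) μ)
    (hψ : Integrable ψ) (hψα : ∀ y, ‖ft ψ y‖ ≤ L * |y| ^ (α / 2)) (j : ℕ) (k : ℤ) :
    ‖∫ u : ℝ, ∫ v : ℝ, R (u - v) * conj (wav ψ j k u) * wav ψ j k v‖ ≤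
      L ^ 2 / (Real.pi * (2 : ℝ) ^ (1 + j * (1 + α))) * ∫ z, ‖S z‖ * |z| ^ α ∂μ := by
  set φ := wav ψ j k
  set C : ℝ := L ^ 2 / (2 : ℝ) ^ ((j : ℝ) * (1 + α)) with hC
  have hnormalize : ∫ u : ℝ, ∫ v : ℝ, R (u - v) * conj (φ u) * φ v =
      (1 / (2 * Real.pi) : ℝ) *
        ∫ u : ℝ, ∫ v : ℝ, (∫ z : ℝ, exp (I * z * (u - v : ℝ)) * S z ∂μ) * conj (φ u) * φ v := by
    simp only [hR, mul_assoc, integral_const_mul]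
  have hbound := norm_integral_integral_exp_sub_mul_conj_mul_le hS (integrable_wav hψ j k)
    (norm_ft_wav_sq_le hψα j k) (by simpa only [mul_left_comm] using hSα.const_mul C)
  simp only [mul_left_comm _ C, integral_const_mul, ← hC] at hbound
  calc ‖∫ u : ℝ, ∫ v : ℝ, R (u - v) * conj (φ u) * φ v‖
      ≤ 1 / (2 * Real.pi) * (C * ∫ z, ‖S z‖ * |z| ^ α ∂μ) := by
        rw [hnormalize, norm_mul, norm_real, Real.norm_of_nonneg (by positivity)]
        gcongr
    _ = L ^ 2 / (Real.pi * (2 : ℝ) ^ (1 + j * (1 + α))) * ∫ z, ‖S z‖ * |z| ^ α ∂μ := by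
        rw [hC, Real.rpow_add zero_lt_two, Real.rpow_one]
        field_simp

/-- Uniform-in-`k`, geometrically decaying in `j` bound:
`|∫∫ R(u−v) conj(ψ_{jk}(u)) ψ_{jk}(v) du dv| ≤ (L²/(π 2^{1+j(1+α)})) ∫ |R̂(z)| |z|^α dz`. -/
theorem stmt_9 (α : ℝ) (hα : 0 < α)
    (R : ℝ → ℂ) (hRcont : Continuous R) (hRint : Integrable R)
    (hRhatint : Integrable (ft R))
    (hRinv : ∀ t : ℝ, R t =
      (1 / (2 * Real.pi) : ℝ) * ∫ z : ℝ, Complex.exp (Complex.I * z * t) * ft R z)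
    (hRhatα : Integrable (fun z : ℝ => ‖ft R z‖ * |z| ^ α))
    (ψ : ℝ → ℂ) (hψint : Integrable ψ) (hψ0 : ft ψ 0 = 0)
    (L : ℝ) (hL : 0 < L)
    (hHolder : ∀ y y' : ℝ, ‖ft ψ y - ft ψ y'‖ ≤ L * |y - y'| ^ (α / 2)) :
    ∀ (j : ℕ) (k : ℤ),
      ‖∫ u : ℝ, ∫ v : ℝ,
          R (u - v) * (starRingEnd ℂ) (wav ψ j k u) * wav ψ j k v‖ ≤
        (L ^ 2 / (Real.pi * (2 : ℝ) ^ ((1 : ℝ) + (j : ℝ) * (1 + α)))) *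
          ∫ z : ℝ, ‖ft R z‖ * |z| ^ α :=
  stmt_9_general hRhatint hRinv hRhatα hψint fun y ↦ by simpa [hψ0] using hHolder y 0
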